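/- Existence of optimal dual multipliers: if there exists a primal feasible selection x, then the dual problem (D) min{ φ(μ) : μ ∈ ℝ^I, μ ≥ 0 } has a global minimum; i.e., there exists μ* ≥ 0 with φ(μ*) ≤ φ(μ) for every μ ≥ 0. (The dual function φ, being a piecewise affine convex function that is bounded below on the nonnegative orthant by the primal feasible value, attains its infimum there.) -/

import Mathlib

/-- `S` is a finite intersection of affine half-spaces. -/
def IsPolyh {E : Type*} [AddCommGroup E] [Module ℝ E] (S : Set E) : Prop :=
  ∃ F : Set ((E →ₗ[ℝ] ℝ) × ℝ), F.Finite ∧ S = {x | ∀ f ∈ F, f.1 x + f.2 ≤ 0}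

/-- A finite family of lower bounds below a finite family of upper bounds can be separated. -/
lemma exists_sep {A B : Set ℝ} (hA : A.Finite) (hB : B.Finite)
    (h : ∀ a ∈ A, ∀ b ∈ B, a ≤ b) : ∃ s, (∀ a ∈ A, a ≤ s) ∧ ∀ b ∈ B, s ≤ b := by
  rcases A.eq_empty_or_nonempty with rfl | hne
  · obtain ⟨s, hs⟩ := hB.bddBelow
    exact ⟨s, by simp, fun b hb => hs hb⟩
  · exact ⟨sSup A, fun a ha => le_csSup hA.bddAbove ha,
      fun b hb => csSup_le hne fun a ha => h a ha b hb⟩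

/-- One step of Fourier-Motzkin elimination. -/
lemma IsPolyh.elim_dir {E : Type*} [AddCommGroup E] [Module ℝ E] {S : Set E}
    (hS : IsPolyh S) (u : E) : IsPolyh {x | ∃ s : ℝ, x + s • u ∈ S} := by
  obtain ⟨F, hF, rfl⟩ := hS
  refine ⟨{f ∈ F | f.1 u = 0} ∪
    (fun q : ((E →ₗ[ℝ] ℝ) × ℝ) × ((E →ₗ[ℝ] ℝ) × ℝ) =>
      (q.1.1 u) • q.2 - (q.2.1 u) • q.1) '' ({f ∈ F | 0 < f.1 u} ×ˢ {f ∈ F | f.1 u < 0}),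
    (hF.subset (Set.sep_subset _ _)).union
      (((hF.subset (Set.sep_subset _ _)).prod (hF.subset (Set.sep_subset _ _))).image _), ?_⟩
  ext x
  constructor
  · rintro ⟨s, hs⟩ f (⟨hf, hfu⟩ | ⟨⟨f, g⟩, ⟨⟨hf, hfu⟩, ⟨hg, hgu⟩⟩, rfl⟩)
    · have := hs f hf
      simpa [hfu] using this
    · have h1 := hs f hf
      have h2 := hs g hg
      simp only [map_add, map_smul, smul_eq_mul] at h1 h2
      simp only [Prod.fst_sub, Prod.snd_sub, Prod.smul_fst, Prod.smul_snd, LinearMap.sub_apply,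
        LinearMap.smul_apply, smul_eq_mul] at *
      nlinarith [mul_le_mul_of_nonneg_left h2 hfu.le,
        mul_le_mul_of_nonneg_left h1 (neg_pos.2 hgu).le]
  · intro hx
    obtain ⟨s, hs1, hs2⟩ := exists_sep
      (A := (fun g : (E →ₗ[ℝ] ℝ) × ℝ => (g.1 x + g.2) / (-(g.1 u))) '' {f ∈ F | f.1 u < 0})
      (B := (fun f : (E →ₗ[ℝ] ℝ) × ℝ => (-(f.1 x + f.2)) / (f.1 u)) '' {f ∈ F | 0 < f.1 u})
      ((hF.subset (Set.sep_subset _ _)).image _) ((hF.subset (Set.sep_subset _ _)).image _) (by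
        rintro _ ⟨g, ⟨hg, hgu⟩, rfl⟩ _ ⟨f, ⟨hf, hfu⟩, rfl⟩
        have := hx _ (Or.inr ⟨(f, g), ⟨⟨hf, hfu⟩, ⟨hg, hgu⟩⟩, rfl⟩)
        simp only [Prod.fst_sub, Prod.snd_sub, Prod.smul_fst, Prod.smul_snd, LinearMap.sub_apply,
          LinearMap.smul_apply, smul_eq_mul] at this hfu hgu ⊢
        rw [div_le_div_iff₀ (neg_pos.2 hgu) hfu]
        nlinarith)
    refine ⟨s, fun f hf => ?_⟩
    simp only [map_add, map_smul, smul_eq_mul]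
    rcases lt_trichotomy (f.1 u) 0 with h | h | h
    · have := hs1 _ ⟨f, ⟨hf, h⟩, rfl⟩
      simp only at this
      rw [div_le_iff₀ (neg_pos.2 h)] at this
      nlinarith
    · have := hx f (Or.inl ⟨hf, h⟩)
      rw [h]; linarith
    · have := hs2 _ ⟨f, ⟨hf, h⟩, rfl⟩
      simp only at this
      rw [le_div_iff₀ h] at this
      nlinarith

lemma IsPolyh.elim_finset {E ι : Type*} [AddCommGroup E] [Module ℝ E] {S : Set E}
    (hS : IsPolyh S) (u : ι → E) (T : Finset ι) :
    IsPolyh {x | ∃ c : ι → ℝ, x + ∑ i ∈ T, c i • u i ∈ S} := by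
  classical
  induction T using Finset.induction_on with
  | empty => simpa using hS
  | insert j T hj ih =>
    convert ih.elim_dir (u j) using 1
    ext x
    constructor
    · rintro ⟨c, hc⟩
      refine ⟨c j, c, ?_⟩
      rwa [Finset.sum_insert hj, ← add_assoc] at hc
    · rintro ⟨s, c, hc⟩
      refine ⟨Function.update c j s, ?_⟩
      rw [Finset.sum_insert hj, ← add_assoc, Function.update_self]
      have : ∑ i ∈ T, Function.update c j s i • u i = ∑ i ∈ T, c i • u i :=
        Finset.sum_congr rfl fun i hi => by
          have hij : i ≠ j := fun h => hj (h ▸ hi)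
          rw [Function.update_of_ne hij]
      rwa [this]

lemma IsPolyh.isClosed {E : Type*} [AddCommGroup E] [Module ℝ E] {S : Set E}
    (hS : IsPolyh S) (w : E) : IsClosed {t : ℝ | t • w ∈ S} := by
  obtain ⟨F, hF, rfl⟩ := hS
  have h : {t : ℝ | t • w ∈ {x | ∀ f ∈ F, f.1 x + f.2 ≤ 0}}
      = ⋂ f ∈ F, {t : ℝ | t * f.1 w + f.2 ≤ 0} := by
    ext t
    simp
  rw [h]
  exact isClosed_biInter fun f _ => isClosed_le (by fun_prop) (by fun_prop)

/-- A maximum of finitely many affine functions, bounded below on the nonnegative orthant,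
attains its infimum there. -/
lemma exists_min_affine {I K : Type*} [Fintype I] [Finite K] (a : K → (I → ℝ) →ₗ[ℝ] ℝ)
    (b : K → ℝ) (Φ : (I → ℝ) → ℝ) (hΦ : ∀ μ t, Φ μ ≤ t ↔ ∀ k, a k μ + b k ≤ t)
    (m : ℝ) (hm : ∀ μ : I → ℝ, (∀ i, 0 ≤ μ i) → m ≤ Φ μ) :
    ∃ μs : I → ℝ, (∀ i, 0 ≤ μs i) ∧ ∀ μ : I → ℝ, (∀ i, 0 ≤ μ i) → Φ μs ≤ Φ μ := by
  classical
  have hP : IsPolyh {z : (I → ℝ) × ℝ | (∀ i, 0 ≤ z.1 i) ∧ Φ z.1 ≤ z.2} := by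
    refine ⟨Set.range (fun i : I => (-(LinearMap.proj i ∘ₗ LinearMap.fst ℝ (I → ℝ) ℝ), (0 : ℝ))) ∪
      Set.range (fun k : K => (a k ∘ₗ LinearMap.fst ℝ (I → ℝ) ℝ - LinearMap.snd ℝ (I → ℝ) ℝ, b k)),
      (Set.finite_range _).union (Set.finite_range _), ?_⟩
    ext z
    simp only [Set.mem_ofPred_eq, hΦ]
    constructor
    · rintro ⟨h1, h2⟩ f (⟨i, rfl⟩ | ⟨k, rfl⟩)
      · simpa using h1 i
      · have := h2 k
        simp; linarith
    · intro h
      refine ⟨fun i => ?_, fun k => ?_⟩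
      · simpa using h _ (Or.inl ⟨i, rfl⟩)
      · have := h _ (Or.inr ⟨k, rfl⟩)
        simp at this; linarith
  have hcl := (hP.elim_finset (fun i : I => ((Pi.single i 1 : I → ℝ), (0 : ℝ)))
    Finset.univ).isClosed ((0 : I → ℝ), (1 : ℝ))
  have hsum : ∀ (t : ℝ) (c : I → ℝ), t • ((0 : I → ℝ), (1 : ℝ)) +
      ∑ i, c i • ((Pi.single i 1 : I → ℝ), (0 : ℝ)) = (c, t) := by
    intro t c
    ext j
    · simp [Prod.fst_sum, Finset.sum_apply, Pi.single_apply]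
    · simp [Prod.snd_sum]
  simp only [Set.mem_ofPred_eq, hsum] at hcl
  have hbdd : BddBelow {t : ℝ | ∃ c : I → ℝ, (∀ i, 0 ≤ c i) ∧ Φ c ≤ t} :=
    ⟨m, fun t ⟨c, hc, h⟩ => (hm c hc).trans h⟩
  obtain ⟨μs, h0, hle⟩ := hcl.csInf_mem ⟨Φ 0, 0, fun _ => le_rfl, le_rfl⟩ hbdd
  exact ⟨μs, h0, fun μ hμ => hle.trans (csInf_le hbdd ⟨μ, hμ, le_rfl⟩)⟩

/-- Existence of optimal dual multipliers: if there exists a primal feasible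
selection x, then the dual problem min{ φ(μ) : μ ≥ 0 } has a global minimum, i.e. there is
μ* ≥ 0 with φ(μ*) ≤ φ(μ) for every μ ≥ 0. -/
theorem dual_problem_has_minimizer
    {I R P : Type*} [Fintype I] [Fintype R] [Fintype P] [DecidableEq R]
    (ρ : P → R) (v : P → ℝ) (d : P → I → ℝ) (c : I → ℝ)
    (hρ : ∀ r, ∃ p, ρ p = r)
    (φr : R → (I → ℝ) → ℝ)
    (hφr : ∀ r μ, IsGreatest
      ((fun p => v p - ∑ i, μ i * d p i) '' {p | ρ p = r}) (φr r μ))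
    (x : P → ℝ)
    (hx01 : ∀ p, x p = 0 ∨ x p = 1)
    (hxone : ∀ r, ∑ p ∈ Finset.univ.filter (fun p => ρ p = r), x p = 1)
    (hxcap : ∀ i, ∑ p, d p i * x p ≤ c i) :
    ∃ μstar : I → ℝ, (∀ i, 0 ≤ μstar i) ∧
      ∀ μ : I → ℝ, (∀ i, 0 ≤ μ i) →
        ∑ i, c i * μstar i + ∑ r, φr r μstar ≤ ∑ i, c i * μ i + ∑ r, φr r μ := by
  classical
  have hub : ∀ p μ, v p - ∑ i, μ i * d p i ≤ φr (ρ p) μ := fun p μ =>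
    (hφr (ρ p) μ).2 ⟨p, rfl, rfl⟩
  refine exists_min_affine (K := {s : R → P // ∀ r, ρ (s r) = r})
    (fun s => ∑ i, (c i - ∑ r, d (s.1 r) i) • LinearMap.proj i) (fun s => ∑ r, v (s.1 r))
    (fun μ => ∑ i, c i * μ i + ∑ r, φr r μ) ?_ (∑ p, v p * x p) ?_
  · intro μ t
    have key : ∀ s : R → P, (∑ i, (c i - ∑ r, d (s r) i) • (LinearMap.proj i :
        (I → ℝ) →ₗ[ℝ] ℝ)) μ + ∑ r, v (s r)
        = ∑ i, c i * μ i + ∑ r, (v (s r) - ∑ i, μ i * d (s r) i) := by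
      intro s
      simp only [LinearMap.sum_apply, LinearMap.smul_apply, LinearMap.proj_apply, smul_eq_mul,
        sub_mul, Finset.sum_sub_distrib, Finset.sum_mul]
      rw [Finset.sum_comm (s := Finset.univ (α := R))]
      simp only [mul_comm]
      ring
    simp only [key]
    constructor
    · rintro h ⟨s, hs⟩
      refine le_trans ?_ h
      gcongr with r
      simpa [hs r] using hub (s r) μ
    · intro h
      choose s hs using fun r => (hφr r μ).1
      refine le_trans (le_of_eq ?_) (h ⟨s, fun r => (hs r).1⟩)
      congr 1
      exact Finset.sum_congr rfl fun r _ => (hs r).2.symm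
  · intro μ hμ
    have h1 : ∑ p, x p * (v p - ∑ i, μ i * d p i) ≤ ∑ r, φr r μ := by
      rw [← Finset.sum_fiberwise (s := Finset.univ) (g := ρ)]
      refine Finset.sum_le_sum fun r _ => ?_
      calc _ ≤ ∑ p ∈ Finset.univ.filter (fun p => ρ p = r), x p * φr r μ := by
            refine Finset.sum_le_sum fun p hp => ?_
            have hp' : ρ p = r := (Finset.mem_filter.1 hp).2
            refine mul_le_mul_of_nonneg_left (hp' ▸ hub p μ) ?_
            rcases hx01 p with h | h <;> simp [h]
        _ = φr r μ := by rw [← Finset.sum_mul, hxone, one_mul]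
    have h2 : ∑ i, (∑ p, d p i * x p) * μ i ≤ ∑ i, c i * μ i :=
      Finset.sum_le_sum fun i _ => mul_le_mul_of_nonneg_right (hxcap i) (hμ i)
    have h3 : ∑ p, x p * (v p - ∑ i, μ i * d p i)
        = ∑ p, v p * x p - ∑ i, (∑ p, d p i * x p) * μ i := by
      simp only [mul_sub, Finset.sum_sub_distrib, Finset.mul_sum, Finset.sum_mul]
      rw [Finset.sum_comm (s := Finset.univ (α := P))]
      congr 1
      · exact Finset.sum_congr rfl fun p _ => mul_comm _ _
      · exact Finset.sum_congr rfl fun i _ => Finset.sum_congr rfl fun p _ => by ring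
    linarith
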